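/- arXiv:1612.07657 — 12 statements merged into one kernel-verified Lean document; each statement's English description precedes it below -/
import Mathlib

section
/- Let R be a commutative ring and w : ℕ → ℕ → R a Pascal-type weight. Then the operation ∘ defined on formal power series R[[x]] by [xⁿ](a ∘ b) = Σ_{m=0}^{n} w(n,m) · a_m · b_{n−m} is commutative, associative, bilinear over R, and has the constant series 1 as a two-sided identity; hence (R[[x]], +, ∘) is a commutative ring. -/
open PowerSeries

/-- A Pascal-type weight on a commutative ring `R`. -/
def IsPascalWeight {R : Type*} [CommRing R] (w : ℕ → ℕ → R) : Prop :=
  (∀ n, w n 0 = 1) ∧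
  (∀ n m, m ≤ n → w n m = w n (n - m)) ∧
  (∀ n m k, m ≤ n → w (n + k) k * w n m = w (n + k) (m + k) * w (m + k) k)

/-- The `w`-product of formal power series:
`[xⁿ](a ∘ b) = ∑_{m=0}^{n} w(n,m)·aₘ·b_{n−m}`. -/
noncomputable def wmul {R : Type*} [CommRing R] (w : ℕ → ℕ → R)
    (a b : PowerSeries R) : PowerSeries R :=
  PowerSeries.mk fun n => ∑ m ∈ Finset.range (n + 1),
    w n m * PowerSeries.coeff m a * PowerSeries.coeff (n - m) b

theorem wmul_coeff_antidiag {R : Type*} [CommRing R] (w : ℕ → ℕ → R)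
    (a b : PowerSeries R) (n : ℕ) :
    PowerSeries.coeff n (wmul w a b) = ∑ p ∈ Finset.HasAntidiagonal.antidiagonal n,
      w (p.1 + p.2) p.1 * PowerSeries.coeff p.1 a * PowerSeries.coeff p.2 b := by
  rw [wmul, PowerSeries.coeff_mk, ← Finset.Nat.sum_antidiagonal_eq_sum_range_succ
    (fun i j => w n i * PowerSeries.coeff i a * PowerSeries.coeff j b)]
  refine Finset.sum_congr rfl fun p hp => ?_
  rw [Finset.HasAntidiagonal.mem_antidiagonal.mp hp]

/-- For a Pascal-type weight `w`, the `w`-product on `R[[x]]` is commutative,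
associative, bilinear over `R`, and has the constant series `1` as a two-sided
identity; hence `(R[[x]], +, ∘)` is a commutative ring. -/
theorem wmul_commRing_structure {R : Type*} [CommRing R] (w : ℕ → ℕ → R)
    (hw : IsPascalWeight w) :
    (∀ a b : PowerSeries R, wmul w a b = wmul w b a) ∧
    (∀ a b c : PowerSeries R, wmul w (wmul w a b) c = wmul w a (wmul w b c)) ∧
    (∀ a b c : PowerSeries R, wmul w (a + b) c = wmul w a c + wmul w b c) ∧
    (∀ a b c : PowerSeries R, wmul w a (b + c) = wmul w a b + wmul w a c) ∧
    (∀ (r : R) (a b : PowerSeries R), wmul w (r • a) b = r • wmul w a b) ∧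
    (∀ (r : R) (a b : PowerSeries R), wmul w a (r • b) = r • wmul w a b) ∧
    (∀ a : PowerSeries R, wmul w 1 a = a) ∧
    (∀ a : PowerSeries R, wmul w a 1 = a) := by
  obtain ⟨h0, hs, hp⟩ := hw
  have hcomm : ∀ a b : PowerSeries R, wmul w a b = wmul w b a := by
    intro a b
    ext n
    rw [wmul_coeff_antidiag, wmul_coeff_antidiag, ← Finset.Nat.sum_antidiagonal_swap]
    refine Finset.sum_congr rfl fun p _ => ?_
    have h := hs (p.1 + p.2) p.1 (Nat.le_add_right _ _)
    rw [Nat.add_sub_cancel_left] at h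
    simp only [Prod.fst_swap, Prod.snd_swap]
    rw [add_comm p.2 p.1, h]
    ring
  have hadd : ∀ a b c : PowerSeries R, wmul w (a + b) c = wmul w a c + wmul w b c := by
    intro a b c
    ext n
    simp only [map_add, wmul_coeff_antidiag, ← Finset.sum_add_distrib]
    exact Finset.sum_congr rfl fun p _ => by ring
  have hsmul : ∀ (r : R) (a b : PowerSeries R), wmul w (r • a) b = r • wmul w a b := by
    intro r a b
    ext n
    simp only [PowerSeries.coeff_smul, wmul_coeff_antidiag, smul_eq_mul, Finset.mul_sum]
    exact Finset.sum_congr rfl fun p _ => by ring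
  have hone : ∀ a : PowerSeries R, wmul w 1 a = a := by
    intro a
    ext n
    rw [wmul, PowerSeries.coeff_mk, Finset.sum_eq_single 0]
    · simp [h0]
    · intro m _ hm
      simp [PowerSeries.coeff_one, hm]
    · simp
  refine ⟨hcomm, ?_, hadd, ?_, hsmul, ?_, hone, ?_⟩
  · intro a b c
    ext n
    simp only [wmul_coeff_antidiag, Finset.mul_sum, Finset.sum_mul]
    have key : ∀ i j k : ℕ, w (i + j + k) (i + j) * w (i + j) i
        = w (i + (j + k)) i * w (j + k) j := by
      intro i j k
      have h := hp (j + k) j i (Nat.le_add_right _ _)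
      rw [show j + k + i = i + (j + k) by ring, show j + i = i + j by ring] at h
      rw [h, add_assoc]
    trans ∑ p ∈ Finset.HasAntidiagonal.antidiagonal n, ∑ q ∈ Finset.HasAntidiagonal.antidiagonal p.1,
        (w (q.1 + (q.2 + p.2)) q.1 * w (q.2 + p.2) q.2 * PowerSeries.coeff q.1 a *
          PowerSeries.coeff q.2 b * PowerSeries.coeff p.2 c)
    · refine Finset.sum_congr rfl fun p _ => Finset.sum_congr rfl fun q hq => ?_
      rw [← key, Finset.HasAntidiagonal.mem_antidiagonal.mp hq]
      ring
    · rw [Finset.sum_sigma', Finset.sum_sigma']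
      refine Finset.sum_bij' (fun x _ => ⟨(x.2.1, x.2.2 + x.1.2), (x.2.2, x.1.2)⟩)
        (fun x _ => ⟨(x.1.1 + x.2.1, x.2.2), (x.1.1, x.2.1)⟩) ?_ ?_ ?_ ?_ ?_
      all_goals
        rintro ⟨⟨i, j⟩, ⟨k, l⟩⟩ h
        simp only [Finset.mem_sigma, Finset.HasAntidiagonal.mem_antidiagonal] at h ⊢
        obtain ⟨h1, h2⟩ := h
        subst h2
        subst h1
      · simp [add_assoc]
      · simp [add_assoc]
      · rfl
      · rfl
      · ring
  · intro a b c
    rw [hcomm, hadd, hcomm b, hcomm c]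
  · intro r a b
    rw [hcomm, hsmul, hcomm b]
  · intro a
    rw [hcomm, hone]
end

section
/- Let K be a field, φ ∈ K nonzero, and q ≥ 2 an integer. Define c : ℕ → K by c_{qk+i} = φ^{−k} for all k ≥ 0 and 0 ≤ i < q. Then for all 0 ≤ m ≤ n: c_m · c_{n−m} / c_n = 1 if n mod q ≥ m mod q, and c_m · c_{n−m} / c_n = φ if n mod q < m mod q. -/
/-- For `φ ≠ 0` in a field, `q ≥ 2`, and the sequence `c` with `c_{qk+i} = φ^{−k}`
for `0 ≤ i < q`, the entries `cₘ·c_{n−m}/cₙ` of the generalized Pascal matrix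
equal `1` when `n mod q ≥ m mod q` and `φ` when `n mod q < m mod q`. -/
theorem pascal_entries_of_phi_q {K : Type*} [Field K] (φ : K) (hφ : φ ≠ 0)
    (q : ℕ) (hq : 2 ≤ q) (c : ℕ → K)
    (hc : ∀ k i : ℕ, i < q → c (q * k + i) = (φ⁻¹) ^ k)
    (n m : ℕ) (hmn : m ≤ n) :
    c m * c (n - m) / c n = if m % q ≤ n % q then 1 else φ := by
  have h0 : 0 < q := by omega
  have key : ∀ a, c a = (φ⁻¹) ^ (a / q) := fun a => by
    have h := hc (a / q) (a % q) (Nat.mod_lt _ h0)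
    rwa [Nat.div_add_mod] at h
  obtain ⟨d, rfl⟩ := Nat.exists_eq_add_of_le hmn
  rw [Nat.add_sub_cancel_left, key, key, key, Nat.add_div h0]
  have h1 := Nat.mod_lt m h0
  have h2 := Nat.mod_lt d h0
  have h3 := Nat.add_mod_add_ite m d q
  by_cases h : q ≤ m % q + d % q
  · rw [if_pos h] at h3 ⊢
    rw [if_neg (by omega)]
    rw [div_eq_iff (pow_ne_zero _ (inv_ne_zero hφ)), pow_succ', pow_add,
      mul_inv_cancel_left₀ hφ]
  · rw [if_neg h] at h3 ⊢
    rw [if_pos (by omega), add_zero, ← pow_add]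
    exact div_self (pow_ne_zero _ (inv_ne_zero hφ))
end

section
/- Let R be a commutative ring and w : ℕ → ℕ → R a Pascal-type weight, with w-product ∘ on R[[x]]. Then for every a ∈ R[[x]] and every integer n ≥ 1, x · (a^{(n)})′ = n · (a^{(n−1)} ∘ (x · a′)), where ′ denotes the formal derivative and a^{(n)} is the n-th ∘-power of a (a^{(0)} = 1). -/
open PowerSeries

/-- The `n`-th `∘`-power of `a` (with `a^{(0)} = 1`). -/
noncomputable def wpow {R : Type*} [CommRing R] (w : ℕ → ℕ → R)
    (a : PowerSeries R) : ℕ → PowerSeries R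
  | 0 => 1
  | n + 1 => wmul w a (wpow w a n)

/-- The formal derivative of a power series. -/
noncomputable def pderiv {R : Type*} [CommRing R] (a : PowerSeries R) : PowerSeries R :=
  PowerSeries.mk fun n => ((n : R) + 1) * PowerSeries.coeff (n + 1) a

theorem coeff_wmul_aux {R : Type*} [CommRing R] (w : ℕ → ℕ → R) (a b : PowerSeries R) (n : ℕ) :
    coeff n (wmul w a b) = ∑ p ∈ Finset.HasAntidiagonal.antidiagonal n, w n p.1 * coeff p.1 a * coeff p.2 b := by
  rw [wmul, coeff_mk, Finset.Nat.sum_antidiagonal_eq_sum_range_succ_mk]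

theorem coeff_D_aux {R : Type*} [CommRing R] (a : PowerSeries R) (n : ℕ) :
    coeff n (X * pderiv a) = n * coeff n a := by
  cases n with
  | zero => simp
  | succ n => rw [coeff_succ_X_mul, pderiv, coeff_mk]; push_cast; rfl

theorem wmul_comm_aux {R : Type*} [CommRing R] (w : ℕ → ℕ → R)
    (hw : IsPascalWeight w) (a b : PowerSeries R) : wmul w a b = wmul w b a := by
  ext n
  rw [coeff_wmul_aux, coeff_wmul_aux, ← Finset.Nat.sum_antidiagonal_swap]
  refine Finset.sum_congr rfl fun p hp => ?_
  have h := Finset.HasAntidiagonal.mem_antidiagonal.1 hp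
  have h2 := hw.2.1 n p.1 (by omega)
  have h3 : n - p.1 = p.2 := by omega
  rw [h3] at h2
  simp only [Prod.fst_swap, Prod.snd_swap]
  rw [h2]; ring

theorem wmul_assoc_aux {R : Type*} [CommRing R] (w : ℕ → ℕ → R)
    (hw : IsPascalWeight w) (a b c : PowerSeries R) :
    wmul w (wmul w a b) c = wmul w a (wmul w b c) := by
  ext n
  simp only [coeff_wmul_aux, Finset.mul_sum, Finset.sum_mul]
  rw [Finset.sum_sigma', Finset.sum_sigma']
  refine Finset.sum_nbij' (fun s => ⟨(s.2.1, s.2.2 + s.1.2), (s.2.2, s.1.2)⟩)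
    (fun s => ⟨(s.1.1 + s.2.1, s.2.2), (s.1.1, s.2.1)⟩) ?_ ?_ ?_ ?_ ?_
  · rintro ⟨⟨i, j⟩, ⟨k, l⟩⟩ h
    simp at h ⊢; omega
  · rintro ⟨⟨i, j⟩, ⟨k, l⟩⟩ h
    simp at h ⊢; omega
  · rintro ⟨⟨i, j⟩, ⟨k, l⟩⟩ h
    simp at h ⊢; obtain ⟨h1, rfl⟩ := h; simp
  · rintro ⟨⟨i, j⟩, ⟨k, l⟩⟩ h
    simp at h ⊢; obtain ⟨h1, rfl⟩ := h; simp
  · rintro ⟨⟨i, j⟩, ⟨k, l⟩⟩ h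
    simp only [Finset.mem_sigma, Finset.HasAntidiagonal.mem_antidiagonal] at h ⊢
    obtain ⟨rfl, rfl⟩ := h
    have := hw.2.2 (l + j) l k (by omega)
    rw [show l + j + k = k + l + j by omega, show l + k = k + l by omega] at this
    linear_combination (-(coeff k a * coeff l b * coeff j c)) * this

theorem D_wmul_aux {R : Type*} [CommRing R] (w : ℕ → ℕ → R) (a b : PowerSeries R) :
    X * pderiv (wmul w a b) = wmul w (X * pderiv a) b + wmul w a (X * pderiv b) := by
  ext n
  simp only [map_add, coeff_D_aux, coeff_wmul_aux]
  rw [Finset.mul_sum, ← Finset.sum_add_distrib]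
  refine Finset.sum_congr rfl fun p hp => ?_
  have h := Finset.HasAntidiagonal.mem_antidiagonal.1 hp
  have h2 : (n : R) = p.1 + p.2 := by rw [← h]; push_cast; rfl
  rw [h2]; ring

theorem wmul_natCast_aux {R : Type*} [CommRing R] (w : ℕ → ℕ → R) (a b : PowerSeries R) (k : ℕ) :
    wmul w a ((k : PowerSeries R) * b) = (k : PowerSeries R) * wmul w a b := by
  ext n
  simp only [← nsmul_eq_mul, map_nsmul, coeff_wmul_aux, Finset.smul_sum]
  refine Finset.sum_congr rfl fun p hp => ?_
  simp only [nsmul_eq_mul]; ring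

theorem wpow_deriv_aux {R : Type*} [CommRing R] (w : ℕ → ℕ → R)
    (hw : IsPascalWeight w) (a : PowerSeries R) (n : ℕ) :
    X * pderiv (wpow w a (n + 1)) =
      ((n + 1 : ℕ) : PowerSeries R) * wmul w (wpow w a n) (X * pderiv a) := by
  induction n with
  | zero =>
    have h1 : X * pderiv (1 : PowerSeries R) = ((0 : ℕ) : PowerSeries R) * 0 := by
      ext n
      rw [coeff_D_aux, coeff_one]
      split_ifs with h <;> simp [h]
    simp only [wpow]
    rw [D_wmul_aux, h1, wmul_natCast_aux, wmul_comm_aux w hw 1]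
    simp
  | succ n ih =>
    rw [wpow, D_wmul_aux, ih, wmul_natCast_aux, ← wmul_assoc_aux w hw,
      wmul_comm_aux w hw (X * pderiv a)]
    rw [show wmul w a (wpow w a n) = wpow w a (n + 1) from rfl]
    push_cast; ring

/-- For a Pascal-type weight `w`, `x·(a^{(n)})′ = n·(a^{(n−1)} ∘ (x·a′))` for every
power series `a` and every `n ≥ 1`. -/
theorem wpow_deriv {R : Type*} [CommRing R] (w : ℕ → ℕ → R)
    (hw : IsPascalWeight w) (a : PowerSeries R) (n : ℕ) (hn : 1 ≤ n) :
    X * pderiv (wpow w a n) = (n : PowerSeries R) * wmul w (wpow w a (n - 1)) (X * pderiv a) := by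
  obtain ⟨m, rfl⟩ : ∃ m, n = m + 1 := ⟨n - 1, by omega⟩
  exact wpow_deriv_aux w hw a m
end

section
/- Over a commutative ring, for all integers n, m ≥ 0 and all i, j ∈ {0, 1}: the coefficient of x^{2n+i} in the formal power series (1+x)^{1−j} · x^{2m+j} · (1−x²)^{−(m+1)} equals binom(n, m) if i ≥ j, and equals 0 if i < j. -/
open PowerSeries

theorem aux_expand {R : Type*} [CommRing R] (u : PowerSeries R)
    (hu : (1 - X ^ 2) * u = 1) (m : ℕ) :
    X ^ (2 * m) * u ^ (m + 1) =
      expand 2 two_ne_zero (X ^ m * (mk 1 : PowerSeries R) ^ (m + 1)) := by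
  have h1 : expand 2 two_ne_zero (mk 1 : PowerSeries R) * (1 - X ^ 2) = 1 := by
    have := congrArg (expand 2 two_ne_zero) (mk_one_mul_one_sub_eq_one R)
    simpa only [map_mul, map_sub, map_one, expand_X] using this
  have h2 : expand 2 two_ne_zero (mk 1 : PowerSeries R) = u := left_inv_eq_right_inv h1 hu
  rw [map_mul, map_pow, map_pow, h2, expand_X, pow_mul]

theorem aux_coeff {R : Type*} [CommRing R] (n m : ℕ) :
    coeff n (X ^ m * (mk 1 : PowerSeries R) ^ (m + 1)) = (n.choose m : R) := by
  rw [mk_one_pow_eq_mk_choose_add, coeff_X_pow_mul']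
  split_ifs with h
  · rw [coeff_mk, Nat.add_sub_cancel' h]
  · rw [Nat.choose_eq_zero_of_lt (by omega), Nat.cast_zero]

/-- Over a commutative ring, for `i, j ∈ {0,1}`, the coefficient of `x^{2n+i}` in
`(1+x)^{1−j}·x^{2m+j}·(1−x²)^{−(m+1)}` equals `binom(n,m)` if `i ≥ j` and `0` if
`i < j`.  Here the inverse of `1 − x²` is expressed by a series `u` with
`(1 − x²)·u = 1`. -/
theorem coeff_Pg_neg_one {R : Type*} [CommRing R] (u : PowerSeries R)
    (hu : (1 - X ^ 2) * u = 1) (n m i j : ℕ) (hi : i ≤ 1) (hj : j ≤ 1) :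
    PowerSeries.coeff (R := R) (2 * n + i) ((1 + X) ^ (1 - j) * X ^ (2 * m + j) * u ^ (m + 1)) =
      if j ≤ i then (n.choose m : R) else 0 := by
  have hE := aux_expand u hu m
  set E := X ^ (2 * m) * u ^ (m + 1) with hEd
  have he : ∀ k, coeff (2 * k) E = (k.choose m : R) := fun k => by
    rw [hE, coeff_expand_mul, aux_coeff]
  have ho : ∀ k, coeff (2 * k + 1) E = 0 := fun k => by
    rw [hE, coeff_expand_of_not_dvd]
    omega
  have hx : coeff (2 * n) (X * E) = 0 := by
    rcases n with _ | n
    · simp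
    · rw [show 2 * (n + 1) = (2 * n + 1) + 1 by ring, coeff_succ_X_mul, ho]
  have h0 : (1 + X) ^ (1 - 0) * X ^ (2 * m + 0) * u ^ (m + 1) = E + X * E := by
    rw [hEd]; simp only [Nat.sub_zero, Nat.add_zero]; ring
  have h1 : (1 + X) ^ (1 - 1) * X ^ (2 * m + 1) * u ^ (m + 1) = X * E := by
    rw [hEd]; simp only [Nat.sub_self]; ring
  interval_cases j
  · rw [h0, map_add]
    interval_cases i
    · simp [he, hx]
    · rw [coeff_succ_X_mul, ho, he]; simp
  · rw [h1]
    interval_cases i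
    · simp [hx]
    · rw [coeff_succ_X_mul, he]; simp
end

section
/- Let K be a commutative ℚ-algebra, q ≥ 2 an integer, and φ, β ∈ K. Define the matrix M_φ by M_φ(qn+i, qm+j) = C(φ, n−m) · C(φ, i−j) for all n, m ≥ 0 and 0 ≤ i, j < q. Then: (a) M_1(N, M) = 1 if M ≤ N and N mod q ≥ M mod q, and M_1(N, M) = 0 otherwise (i.e. M_1 = ₍₀,q₎P); (b) for all M ≤ N, Σ_{K=M}^{N} M_φ(N, K) · M_β(K, M) = M_{φ+β}(N, M). -/
/-- The generalized binomial coefficient `C(φ,k) = binom(φ+k−1, k)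
= φ(φ+1)⋯(φ+k−1)/k!` for `k ≥ 0`, and `0` for `k < 0`. -/
noncomputable def genC {K : Type*} [CommRing K] [Algebra ℚ K] (φ : K) (k : ℤ) : K :=
  if 0 ≤ k then
    (∏ i ∈ Finset.range k.toNat, (φ + (i : K))) *
      algebraMap ℚ K (1 / (k.toNat.factorial : ℚ))
  else 0

/-- The matrix realizing the `φ`-th power of `₍₀,q₎P`:
`M_φ(qn+i, qm+j) = C(φ, n−m)·C(φ, i−j)` for `0 ≤ i, j < q`. -/
noncomputable def Mpow {K : Type*} [CommRing K] [Algebra ℚ K] (q : ℕ) (φ : K)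
    (N M : ℕ) : K :=
  genC φ ((N / q : ℕ) - (M / q : ℕ) : ℤ) * genC φ ((N % q : ℕ) - (M % q : ℕ) : ℤ)

theorem genC_nat {K : Type*} [CommRing K] [Algebra ℚ K] (φ : K) (n : ℕ) :
    genC φ (n : ℤ) = (∏ i ∈ Finset.range n, (φ + (i : K))) *
      algebraMap ℚ K (1 / (n.factorial : ℚ)) := by
  simp [genC]

theorem genC_neg {K : Type*} [CommRing K] [Algebra ℚ K] (φ : K) (k : ℤ) (h : k < 0) :
    genC φ k = 0 := by
  simp [genC, h]

theorem genC_succ {K : Type*} [CommRing K] [Algebra ℚ K] (φ : K) (n : ℕ) :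
    ((n : K) + 1) * genC φ ((n + 1 : ℕ) : ℤ) = (φ + n) * genC φ (n : ℤ) := by
  rw [genC_nat, genC_nat, Finset.prod_range_succ]
  have h : algebraMap ℚ K (1 / (n.factorial : ℚ)) =
      ((n : K) + 1) * algebraMap ℚ K (1 / ((n + 1).factorial : ℚ)) := by
    have : ((n : K) + 1) = algebraMap ℚ K ((n : ℚ) + 1) := by simp
    rw [this, ← map_mul]
    congr 1
    rw [Nat.factorial_succ]
    have h1 : (n.factorial : ℚ) ≠ 0 := by exact_mod_cast n.factorial_ne_zero
    have h2 : (n : ℚ) + 1 ≠ 0 := by positivity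
    push_cast
    field_simp
  rw [h]
  ring

theorem cancel_succ {K : Type*} [CommRing K] [Algebra ℚ K] (n : ℕ) {x y : K}
    (h : ((n : K) + 1) * x = ((n : K) + 1) * y) : x = y := by
  have h1 : algebraMap ℚ K (1 / ((n : ℚ) + 1)) * ((n : K) + 1) = 1 := by
    have : ((n : K) + 1) = algebraMap ℚ K ((n : ℚ) + 1) := by simp
    rw [this, ← map_mul]
    have h2 : (n : ℚ) + 1 ≠ 0 := by positivity
    rw [one_div_mul_cancel h2, map_one]
  have := congrArg (fun z => algebraMap ℚ K (1 / ((n : ℚ) + 1)) * z) h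
  simpa only [← mul_assoc, h1, one_mul] using this

theorem genC_vander {K : Type*} [CommRing K] [Algebra ℚ K] (φ β : K) (n : ℕ) :
    ∑ p ∈ Finset.HasAntidiagonal.antidiagonal n, genC φ (p.1 : ℤ) * genC β (p.2 : ℤ) =
      genC (φ + β) (n : ℤ) := by
  induction n with
  | zero => simp [genC]
  | succ n ih =>
    apply cancel_succ n
    rw [genC_succ, ← ih, Finset.mul_sum, Finset.mul_sum]
    have e : ∀ p ∈ Finset.HasAntidiagonal.antidiagonal (n + 1),
        ((n : K) + 1) * (genC φ (p.1 : ℤ) * genC β (p.2 : ℤ)) =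
        (p.1 : K) * genC φ (p.1 : ℤ) * genC β (p.2 : ℤ) +
        genC φ (p.1 : ℤ) * ((p.2 : K) * genC β (p.2 : ℤ)) := by
      intro p hp
      have : (p.1 : K) + p.2 = (n : K) + 1 := by
        exact_mod_cast congrArg (Nat.cast : ℕ → K) (Finset.HasAntidiagonal.mem_antidiagonal.1 hp)
      rw [← this]; ring
    rw [Finset.sum_congr rfl e, Finset.sum_add_distrib, Finset.Nat.sum_antidiagonal_succ,
      Finset.Nat.sum_antidiagonal_succ'
        (f := fun p : ℕ × ℕ => genC φ (p.1 : ℤ) * ((p.2 : K) * genC β (p.2 : ℤ)))]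
    simp only [Nat.cast_zero, zero_mul, mul_zero, zero_add, add_zero]
    rw [← Finset.sum_add_distrib]
    apply Finset.sum_congr rfl
    intro p hp
    have : (p.1 : K) + p.2 = (n : K) := by
      exact_mod_cast congrArg (Nat.cast : ℕ → K) (Finset.HasAntidiagonal.mem_antidiagonal.1 hp)
    have h1 := genC_succ φ p.1
    have h2 := genC_succ β p.2
    rw [← this]
    push_cast at h1 h2 ⊢
    rw [h1, h2]; ring

theorem genC_conv {K : Type*} [CommRing K] [Algebra ℚ K] (φ β : K) (A n m : ℕ)
    (hn : n < A) :
    ∑ a ∈ Finset.range A, genC φ ((n : ℤ) - a) * genC β ((a : ℤ) - m) =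
      genC (φ + β) ((n : ℤ) - m) := by
  by_cases h : n < m
  · rw [genC_neg (φ + β) _ (by omega)]
    apply Finset.sum_eq_zero
    intro a _
    by_cases ha : a < m
    · rw [genC_neg β _ (by omega), mul_zero]
    · rw [genC_neg φ _ (by omega), zero_mul]
  · obtain ⟨d, rfl⟩ := Nat.exists_eq_add_of_le (not_lt.1 h)
    have e : ((m + d : ℕ) : ℤ) - m = (d : ℤ) := by push_cast; ring
    rw [e, ← genC_vander]
    symm
    apply Finset.sum_of_injOn (fun p : ℕ × ℕ => m + p.2)
    · intro p hp r hr hpr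
      simp only [Finset.mem_coe, Finset.HasAntidiagonal.mem_antidiagonal] at hp hr hpr
      ext <;> omega
    · intro p hp
      simp at hp ⊢
      omega
    · intro a _ ha
      by_cases h1 : a < m
      · rw [genC_neg β _ (by omega), mul_zero]
      · by_cases h2 : m + d < a
        · rw [genC_neg φ _ (by omega), zero_mul]
        · exfalso
          apply ha
          refine ⟨(m + d - a, a - m), ?_, ?_⟩
          · simp; omega
          · simp; omega
    · intro p hp
      have := Finset.HasAntidiagonal.mem_antidiagonal.1 hp
      congr 2
      · push_cast; omega
      · push_cast; omega

theorem sum_range_mul_aux {K : Type*} [CommRing K] (q A : ℕ) (f : ℕ → K) :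
    ∑ k ∈ Finset.range (q * A), f k =
      ∑ a ∈ Finset.range A, ∑ b ∈ Finset.range q, f (q * a + b) := by
  induction A with
  | zero => simp
  | succ A ih => rw [Finset.sum_range_succ, Nat.mul_succ, Finset.sum_range_add, ih]

theorem genC_one {K : Type*} [CommRing K] [Algebra ℚ K] (k : ℤ) :
    genC (1 : K) k = if 0 ≤ k then 1 else 0 := by
  by_cases h : 0 ≤ k
  · obtain ⟨n, rfl⟩ := Int.eq_ofNat_of_zero_le h
    rw [if_pos h]
    induction n with
    | zero => simp [genC]
    | succ n ih =>
      apply cancel_succ n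
      rw [genC_succ, ih (by omega)]; ring
  · rw [if_neg h, genC_neg _ _ (by omega)]

/-- (a) `M₁ = ₍₀,q₎P`, i.e. `M₁(N,M) = 1` if `M ≤ N` and `N mod q ≥ M mod q`, and
`0` otherwise; (b) the family `M_φ` satisfies `M_φ · M_β = M_{φ+β}`. -/
theorem Mpow_one_and_mul {K : Type*} [CommRing K] [Algebra ℚ K]
    (q : ℕ) (hq : 2 ≤ q) (φ β : K) :
    (∀ N M : ℕ, Mpow q (1 : K) N M =
      if M ≤ N ∧ M % q ≤ N % q then 1 else 0) ∧
    (∀ N M : ℕ, M ≤ N →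
      ∑ k ∈ Finset.Icc M N, Mpow q φ N k * Mpow q β k M = Mpow q (φ + β) N M) := by
  have hq0 : 0 < q := by omega
  refine ⟨?_, ?_⟩
  · intro N M
    unfold Mpow
    rw [genC_one, genC_one, ite_zero_mul_ite_zero, mul_one]
    congr 1
    apply propext
    constructor
    · rintro ⟨h1, h2⟩
      have h3 : M / q ≤ N / q := by omega
      have := Nat.mul_le_mul_left q h3
      have := Nat.div_add_mod M q
      have := Nat.div_add_mod N q
      omega
    · rintro ⟨h1, h2⟩
      have := Nat.div_le_div_right (c := q) h1
      omega
  · intro N M hMN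
    have hz : ∀ (γ : K) (a b : ℕ), a < b → Mpow q γ a b = 0 := by
      intro γ a b hab
      unfold Mpow
      by_cases h : a / q < b / q
      · rw [genC_neg _ _ (by omega), zero_mul]
      · have := Nat.mul_le_mul_left q (not_lt.1 h)
        have := Nat.div_add_mod a q
        have := Nat.div_add_mod b q
        rw [genC_neg _ ((a % q : ℕ) - (b % q : ℕ) : ℤ) (by omega), mul_zero]
    have hsub : Finset.Icc M N ⊆ Finset.range (q * (N / q + 1)) := by
      intro k hk
      have := Finset.mem_Icc.1 hk
      have := Nat.div_add_mod N q
      have := Nat.mod_lt N hq0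
      rw [Finset.mem_range, Nat.mul_succ]
      omega
    rw [Finset.sum_subset hsub, sum_range_mul_aux]
    · rw [show Mpow q (φ + β) N M = _ from rfl, Mpow,
        ← genC_conv φ β (N / q + 1) (N / q) (M / q) (by omega),
        ← genC_conv φ β q (N % q) (M % q) (Nat.mod_lt N hq0), Finset.sum_mul_sum]
      apply Finset.sum_congr rfl
      intro a _
      apply Finset.sum_congr rfl
      intro b hb
      have hb' := Finset.mem_range.1 hb
      have e1 : (q * a + b) / q = a := by
        rw [Nat.mul_add_div hq0, Nat.div_eq_of_lt hb', add_zero]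
      have e2 : (q * a + b) % q = b := by
        rw [Nat.mul_add_mod, Nat.mod_eq_of_lt hb']
      unfold Mpow
      rw [e1, e2]
      ring
    · intro k _ hk
      rw [Finset.mem_Icc] at hk
      by_cases h : k < M
      · rw [hz β k M h, mul_zero]
      · rw [hz φ N k (by omega), zero_mul]
end

section
/- Let q ≥ 2 be an integer. Define an integer matrix N whose row with index qn+m (n ≥ 0, 0 ≤ m < q) consists of the coefficients of the polynomial r_{qn+m}(x), where r_0(x) = 1; r_m(x) = x^{m−1}(x−1) for n = 0, 1 ≤ m < q; r_{qn}(x) = x^{q(n−1)}(x^q − 1) for n ≥ 1; and r_{qn+m}(x) = x^{q(n−1)+m−1}(x−1)(x^q − 1) for n ≥ 1, 1 ≤ m < q; that is, N_{qn+m, k} = [x^k] r_{qn+m}(x). Then N is the two-sided inverse of ₍₀,q₎P: Σ_k (₍₀,q₎P)_{a,k} · N_{k,b} = δ_{a,b} and Σ_k N_{a,k} · (₍₀,q₎P)_{k,b} = δ_{a,b} for all a, b ≥ 0. -/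
open Polynomial

/-- The polynomial forming row `qn+m` of the inverse of `₍₀,q₎P`:
`r₀ = 1`; `rₘ = x^{m−1}(x−1)` for `n = 0`, `1 ≤ m < q`;
`r_{qn} = x^{q(n−1)}(x^q−1)` for `n ≥ 1`;
`r_{qn+m} = x^{q(n−1)+m−1}(x−1)(x^q−1)` for `n ≥ 1`, `1 ≤ m < q`. -/
noncomputable def rowPoly (q idx : ℕ) : Polynomial ℤ :=
  if idx = 0 then 1
  else if idx / q = 0 then X ^ (idx % q - 1) * (X - 1)
  else if idx % q = 0 then X ^ (q * (idx / q - 1)) * (X ^ q - 1)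
  else X ^ (q * (idx / q - 1) + idx % q - 1) * (X - 1) * (X ^ q - 1)

/-- The entries of the matrix `₍₀,q₎P`. -/
def zeroPascal (q n m : ℕ) : ℤ :=
  if m ≤ n ∧ m % q ≤ n % q then 1 else 0

lemma zp_eq (q n m n' m' : ℕ) (hm : m < q) (hm' : m' < q) :
    zeroPascal q (q * n + m) (q * n' + m') = if n' ≤ n ∧ m' ≤ m then 1 else 0 := by
  unfold zeroPascal
  rw [Nat.mul_add_mod, Nat.mul_add_mod, Nat.mod_eq_of_lt hm, Nat.mod_eq_of_lt hm']
  congr 1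
  apply propext
  constructor
  · rintro ⟨h1, h2⟩
    refine ⟨?_, h2⟩
    by_contra! h
    have : q * (n + 1) ≤ q * n' := Nat.mul_le_mul_left q h
    rw [Nat.mul_add] at this
    omega
  · rintro ⟨h1, h2⟩
    exact ⟨Nat.add_le_add (Nat.mul_le_mul_left q h1) h2, h2⟩

lemma rp_eq (q n m : ℕ) (hm : m < q) :
    rowPoly q (q * n + m) = X ^ (q * n + m)
      - (if m = 0 then 0 else X ^ (q * n + (m - 1)))
      - (if n = 0 then 0 else X ^ (q * (n - 1) + m))
      + (if m = 0 ∨ n = 0 then 0 else X ^ (q * (n - 1) + (m - 1))) := by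
  have hq : 0 < q := by omega
  have h1 : (q * n + m) / q = n := by
    rw [Nat.mul_add_div hq, Nat.div_eq_of_lt hm, Nat.add_zero]
  have h2 : (q * n + m) % q = m := by
    rw [Nat.mul_add_mod, Nat.mod_eq_of_lt hm]
  unfold rowPoly
  rw [h1, h2]
  rcases n with _ | n <;> rcases m with _ | m
  · simp
  · simp; ring
  · simp [hq.ne']; ring
  · have e : q * n + (m + 1) - 1 = q * n + m := by omega
    simp [e]; ring

lemma sum_X_pow (f : ℕ → ℤ) (a j : ℕ) (h : j ≤ a) :
    ∑ k ∈ Finset.range (a + 1), (X ^ j : Polynomial ℤ).coeff k * f k = f j := by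
  simp [coeff_X_pow]; omega

lemma second (q : ℕ) (hq : 2 ≤ q) (a b : ℕ) : ∑ k ∈ Finset.range (a + 1),
        (rowPoly q a).coeff k * zeroPascal q k b = if a = b then 1 else 0 := by
  obtain ⟨n, m, hm, rfl⟩ : ∃ n m, m < q ∧ a = q * n + m :=
    ⟨a / q, a % q, Nat.mod_lt _ (by omega), (Nat.div_add_mod a q).symm⟩
  obtain ⟨n', m', hm', rfl⟩ : ∃ n m, m < q ∧ b = q * n + m :=
    ⟨b / q, b % q, Nat.mod_lt _ (by omega), (Nat.div_add_mod b q).symm⟩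
  have key : (q * n + m = q * n' + m') ↔ (n = n' ∧ m = m') := by
    constructor
    · intro h
      have h1 := congrArg (· / q) h
      have h2 := congrArg (· % q) h
      simp only [Nat.mul_add_div (show 0 < q by omega), Nat.div_eq_of_lt hm,
        Nat.div_eq_of_lt hm', Nat.mul_add_mod, Nat.mod_eq_of_lt hm, Nat.mod_eq_of_lt hm'] at h1 h2
      omega
    · rintro ⟨rfl, rfl⟩; rfl
  have hn : q * (n - 1) ≤ q * n := Nat.mul_le_mul_left q (by omega)
  simp only [key]
  rw [rp_eq q n m hm]
  simp only [coeff_add, coeff_sub, add_mul, sub_mul, Finset.sum_add_distrib,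
    Finset.sum_sub_distrib]
  rw [sum_X_pow _ _ _ le_rfl, zp_eq _ _ _ _ _ hm hm']
  have s1 := sum_X_pow (fun k => zeroPascal q k (q * n' + m')) (q * n + m) (q * n + (m - 1)) (by omega)
  have s2 := sum_X_pow (fun k => zeroPascal q k (q * n' + m')) (q * n + m) (q * (n - 1) + m) (by omega)
  have s3 := sum_X_pow (fun k => zeroPascal q k (q * n' + m')) (q * n + m) (q * (n - 1) + (m - 1)) (by omega)
  simp only [zp_eq q n (m-1) n' m' (by omega) hm', zp_eq q (n-1) m n' m' (by omega) hm',
    zp_eq q (n-1) (m-1) n' m' (by omega) hm'] at s1 s2 s3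
  by_cases h0 : m = 0 <;> by_cases h1 : n = 0 <;>
    simp only [h0, h1, if_true, if_false, true_or, or_true, or_self, coeff_zero, zero_mul,
      Finset.sum_const_zero] at s1 s2 s3 ⊢ <;>
    (try rw [s1]) <;> (try rw [s2]) <;> (try rw [s3]) <;> split_ifs <;> omega

lemma rp_coeff_zero (q : ℕ) (hq : 2 ≤ q) (a k : ℕ) (h : a < k) : (rowPoly q a).coeff k = 0 := by
  obtain ⟨n, m, hm, rfl⟩ : ∃ n m, m < q ∧ a = q * n + m :=
    ⟨a / q, a % q, Nat.mod_lt _ (by omega), (Nat.div_add_mod a q).symm⟩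
  have hn : q * (n - 1) ≤ q * n := Nat.mul_le_mul_left q (by omega)
  rw [rp_eq q n m hm]
  have t : ∀ j, j ≤ q * n + m → (X ^ j : Polynomial ℤ).coeff k = 0 := by
    intro j hj
    rw [coeff_X_pow, if_neg (by omega)]
  have t1 := t (q * n + m) le_rfl
  have t2 := t (q * n + (m - 1)) (by omega)
  have t3 := t (q * (n - 1) + m) (by omega)
  have t4 := t (q * (n - 1) + (m - 1)) (by omega)
  split_ifs <;> simp only [coeff_add, coeff_sub, coeff_zero, t1, t2, t3, t4] <;> rfl

lemma sum_ext (f : ℕ → ℤ) (a M : ℕ) (h : a < M) (hf : ∀ k, a < k → f k = 0) :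
    ∑ k : Fin M, f k = ∑ k ∈ Finset.range (a + 1), f k := by
  rw [Fin.sum_univ_eq_sum_range]
  symm
  apply Finset.sum_subset
  · intro x; simp; omega
  · intro x _ hx
    apply hf
    simp at hx; omega

/-- The matrix whose rows are the coefficients of the polynomials `r_{qn+m}` is the
two-sided inverse of `₍₀,q₎P`. -/
theorem rowPoly_inverse_zeroPascal (q : ℕ) (hq : 2 ≤ q) :
    (∀ a b : ℕ, ∑ k ∈ Finset.range (a + 1),
        zeroPascal q a k * (rowPoly q k).coeff b = if a = b then 1 else 0) ∧
    (∀ a b : ℕ, ∑ k ∈ Finset.range (a + 1),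
        (rowPoly q a).coeff k * zeroPascal q k b = if a = b then 1 else 0) := by
  refine ⟨fun a b => ?_, second q hq⟩
  let M := a + b + 1
  let A : Matrix (Fin M) (Fin M) ℤ := Matrix.of fun i j => zeroPascal q i j
  let B : Matrix (Fin M) (Fin M) ℤ := Matrix.of fun i j => (rowPoly q i).coeff j
  have hBA : B * A = 1 := by
    ext i j
    rw [Matrix.mul_apply, Matrix.one_apply]
    have := sum_ext (fun k => (rowPoly q i).coeff k * zeroPascal q k j) i M i.2
      (fun k hk => by simp only [rp_coeff_zero q hq i k hk, zero_mul])
    simp only [A, B, Matrix.of_apply, Fin.ext_iff]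
    rw [this, second q hq]
  have hAB : A * B = 1 := mul_eq_one_comm.mp hBA
  have h := congrFun (congrFun hAB ⟨a, by omega⟩) ⟨b, by omega⟩
  rw [Matrix.mul_apply, Matrix.one_apply] at h
  simp only [A, B, Matrix.of_apply, Fin.ext_iff] at h
  rw [sum_ext (fun k => zeroPascal q a k * (rowPoly q k).coeff b) a M (by omega)] at h
  · exact h
  · intro k hk
    simp only [zeroPascal]
    rw [if_neg (by omega), zero_mul]
end

section
/- Let q ≥ 2 be an integer and let a, b ∈ ℕ satisfy a mod q ≥ ⌈q/2⌉ and b mod q ≥ ⌈q/2⌉. Then (a+b) mod q < b mod q, and consequently (₍₀,q₎P)_{a+b, b} = 0; hence x^a ∘ x^b = 0 in the w-product algebra with weight w(n,m) = (₍₀,q₎P)_{n,m} (the monomials with exponent residues q−1, q−2, …, q−⌊q/2⌋ modulo q form a closed system of zero divisors). -/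
open PowerSeries

/-- If `a mod q ≥ ⌈q/2⌉` and `b mod q ≥ ⌈q/2⌉` then `(a+b) mod q < b mod q`, hence
`(₍₀,q₎P)_{a+b,b} = 0` and `x^a ∘ x^b = 0` in the algebra with weight
`w(n,m) = (₍₀,q₎P)_{n,m}`: the monomials with residues `≥ ⌈q/2⌉` form a closed
system of zero divisors. -/
theorem monomials_zero_divisors {R : Type*} [CommRing R] (q : ℕ) (hq : 2 ≤ q)
    (a b : ℕ) (ha : (q + 1) / 2 ≤ a % q) (hb : (q + 1) / 2 ≤ b % q) :
    (a + b) % q < b % q ∧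
    (if b ≤ a + b ∧ b % q ≤ (a + b) % q then (1 : R) else 0) = 0 ∧
    wmul (fun n m => if m ≤ n ∧ m % q ≤ n % q then (1 : R) else 0)
      (X ^ a) (X ^ b) = 0 := by
  have key : ∀ a b : ℕ, (q + 1) / 2 ≤ a % q → (q + 1) / 2 ≤ b % q →
      (a + b) % q < b % q := by
    intro a b ha hb
    have h1 : a % q < q := Nat.mod_lt _ (by omega)
    have h2 : b % q < q := Nat.mod_lt _ (by omega)
    rw [Nat.add_mod, Nat.mod_eq_sub_mod (by omega), Nat.mod_eq_of_lt (by omega)]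
    omega
  have hB := key a b ha hb
  have hA := key b a hb ha
  rw [Nat.add_comm b a] at hA
  refine ⟨hB, if_neg (by omega), ?_⟩
  ext n
  simp only [wmul, PowerSeries.coeff_mk, map_zero, PowerSeries.coeff_X_pow]
  refine Finset.sum_eq_zero fun m hm => ?_
  have hm' := Finset.mem_range.1 hm
  by_cases h1 : m = a
  · by_cases h2 : n - m = b
    · have hn : n = a + b := by omega
      subst hn
      subst h1
      rw [if_neg (by omega)]
      simp
    · simp [h2]
  · simp [h1]
end

section
/- Let R be a commutative ring, q ≥ 2 an integer, and let ∘ be the w-product on R[[x]] with weight w(n,m) = (₍₀,q₎P)_{n,m}. Let z ∈ R[[x]] satisfy z_k = 0 whenever k mod q < ⌈q/2⌉. Then z ∘ z = 0, and consequently the n-th ∘-power of 1 + z equals 1 + n·z for every integer n ≥ 0. -/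
open PowerSeries

theorem wmul_add_left' {R : Type*} [CommRing R] (w : ℕ → ℕ → R) (a b c : PowerSeries R) :
    wmul w (a + b) c = wmul w a c + wmul w b c := by
  ext n
  simp only [wmul, PowerSeries.coeff_mk, map_add, ← Finset.sum_add_distrib]
  exact Finset.sum_congr rfl fun m _ => by ring

theorem wmul_add_right' {R : Type*} [CommRing R] (w : ℕ → ℕ → R) (a b c : PowerSeries R) :
    wmul w a (b + c) = wmul w a b + wmul w a c := by
  ext n
  simp only [wmul, PowerSeries.coeff_mk, map_add, ← Finset.sum_add_distrib]
  exact Finset.sum_congr rfl fun m _ => by ring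

theorem wmul_nsmul_right' {R : Type*} [CommRing R] (w : ℕ → ℕ → R) (a b : PowerSeries R)
    (k : ℕ) : wmul w a (k • b) = k • wmul w a b := by
  ext n
  simp only [wmul, PowerSeries.coeff_mk, map_nsmul, Finset.smul_sum]
  exact Finset.sum_congr rfl fun m _ => by simp only [nsmul_eq_mul]; ring

theorem wmul_one_left' {R : Type*} [CommRing R] (w : ℕ → ℕ → R) (hw : ∀ n, w n 0 = 1)
    (b : PowerSeries R) : wmul w 1 b = b := by
  ext n
  simp only [wmul, PowerSeries.coeff_mk]
  rw [Finset.sum_eq_single 0]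
  · simp [hw]
  · intro m _ hm
    simp [PowerSeries.coeff_one, hm]
  · simp

theorem wmul_one_right' {R : Type*} [CommRing R] (w : ℕ → ℕ → R) (hw : ∀ n, w n n = 1)
    (b : PowerSeries R) : wmul w b 1 = b := by
  ext n
  simp only [wmul, PowerSeries.coeff_mk]
  rw [Finset.sum_eq_single n]
  · simp [hw]
  · intro m h hm
    have : n - m ≠ 0 := by
      have := Finset.mem_range.1 h
      omega
    simp [PowerSeries.coeff_one, this]
  · simp

/-- In the algebra with weight `w(n,m) = (₍₀,q₎P)_{n,m}`, if `z` is supported on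
exponents whose residue mod `q` is at least `⌈q/2⌉`, then `z ∘ z = 0` and the
`n`-th `∘`-power of `1 + z` equals `1 + n·z` for every `n ≥ 0`. -/
theorem lseries_pow {R : Type*} [CommRing R] (q : ℕ) (hq : 2 ≤ q)
    (z : PowerSeries R)
    (hz : ∀ k : ℕ, k % q < (q + 1) / 2 → PowerSeries.coeff k z = 0) :
    wmul (fun n m => if m ≤ n ∧ m % q ≤ n % q then (1 : R) else 0) z z = 0 ∧
    ∀ n : ℕ, wpow (fun n m => if m ≤ n ∧ m % q ≤ n % q then (1 : R) else 0)
      (1 + z) n = 1 + n • z := by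
  have hzz : wmul (fun n m => if m ≤ n ∧ m % q ≤ n % q then (1 : R) else 0) z z = 0 := by
    ext n
    simp only [wmul, PowerSeries.coeff_mk, map_zero]
    refine Finset.sum_eq_zero fun m hm => ?_
    have hmn : m ≤ n := by
      have := Finset.mem_range.1 hm
      omega
    by_cases h1 : m % q < (q + 1) / 2
    · simp [hz m h1]
    by_cases h2 : (n - m) % q < (q + 1) / 2
    · simp [hz _ h2]
    have h3 : ¬ (m ≤ n ∧ m % q ≤ n % q) := by
      rintro ⟨_, h⟩
      have ha := Nat.mod_lt m (show 0 < q by omega)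
      have hb := Nat.mod_lt (n - m) (show 0 < q by omega)
      have hn : n % q = (m % q + (n - m) % q) % q := by
        rw [← Nat.add_mod]
        congr 1
        omega
      rw [Nat.mod_eq_sub_mod (a := m % q + (n - m) % q) (by omega),
        Nat.mod_eq_of_lt (a := m % q + (n - m) % q - q) (by omega)] at hn
      omega
    simp [h3]
  refine ⟨hzz, fun n => ?_⟩
  induction n with
  | zero => simp [wpow]
  | succ n ih =>
    rw [wpow, ih, wmul_add_left', wmul_one_left' _ (by simp), wmul_add_right',
      wmul_one_right' _ (by simp), wmul_nsmul_right', hzz, succ_nsmul]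
    simp only [smul_zero, add_zero]
    ring
end

section
/- Let q ≥ 2 and k ≥ 1 be integers. Then for all n, m ≥ 0 and all 0 ≤ i, j < q^k: B_q(q^k·n + i, q^k·m + j) = B_q(n, m) · B_q(i, j). -/
open Classical in
/-- The entries of the fractal zero generalized Pascal matrix `₍[0,q]₎P`
(the generalized Sierpinski matrix): `B_q(n,m) = 1` if `m ≤ n` and
`n mod qᵏ ≥ m mod qᵏ` for every `k ≥ 1`, and `0` otherwise. -/
noncomputable def Bq (q n m : ℕ) : ℤ :=
  if m ≤ n ∧ ∀ k : ℕ, 1 ≤ k → m % q ^ k ≤ n % q ^ k then 1 else 0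

theorem Bq_aux_lo (q k l n i : ℕ) (h : l ≤ k) : (q ^ k * n + i) % q ^ l = i % q ^ l := by
  obtain ⟨t, rfl⟩ := Nat.exists_eq_add_of_le h
  rw [pow_add, mul_assoc, Nat.mul_add_mod]

theorem Bq_aux_hi (q k t n i : ℕ) (hi : i < q ^ k) :
    (q ^ k * n + i) % q ^ (k + t) = q ^ k * (n % q ^ t) + i := by
  have hp : 0 < q ^ k := by omega
  rw [pow_add, Nat.mod_mul, Nat.mul_add_mod, Nat.mod_eq_of_lt hi, Nat.mul_add_div hp,
    Nat.div_eq_of_lt hi, add_zero, add_comm]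

theorem Bq_aux_le (p a b i j : ℕ) (hi : i < p) (h : p * b + j ≤ p * a + i) : b ≤ a := by
  by_contra hc
  have : p * (a + 1) ≤ p * b := Nat.mul_le_mul_left p (by omega)
  rw [mul_add] at this
  omega

theorem Bq_aux_iff (q : ℕ) (k : ℕ) (hk : 1 ≤ k)
    (n m i j : ℕ) (hi : i < q ^ k) (hj : j < q ^ k) :
    (q ^ k * m + j ≤ q ^ k * n + i ∧
      ∀ l : ℕ, 1 ≤ l → (q ^ k * m + j) % q ^ l ≤ (q ^ k * n + i) % q ^ l) ↔
    ((m ≤ n ∧ ∀ l : ℕ, 1 ≤ l → m % q ^ l ≤ n % q ^ l) ∧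
      (j ≤ i ∧ ∀ l : ℕ, 1 ≤ l → j % q ^ l ≤ i % q ^ l)) := by
  constructor
  · rintro ⟨h1, h2⟩
    have hji : j ≤ i := by
      have := h2 k hk
      rwa [Bq_aux_lo _ _ _ _ _ le_rfl, Bq_aux_lo _ _ _ _ _ le_rfl, Nat.mod_eq_of_lt hi,
        Nat.mod_eq_of_lt hj] at this
    refine ⟨⟨Bq_aux_le _ _ _ _ _ hi h1, fun l hl => ?_⟩, hji, fun l hl => ?_⟩
    · have := h2 (k + l) (by omega)
      rw [Bq_aux_hi _ _ _ _ _ hi, Bq_aux_hi _ _ _ _ _ hj] at this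
      exact Bq_aux_le _ _ _ _ _ hi this
    · rcases le_total l k with h | h
      · have := h2 l hl
        rwa [Bq_aux_lo _ _ _ _ _ h, Bq_aux_lo _ _ _ _ _ h] at this
      · obtain ⟨t, rfl⟩ := Nat.exists_eq_add_of_le h
        have a := Bq_aux_hi q k t 0 i hi
        have b := Bq_aux_hi q k t 0 j hj
        simp only [mul_zero, zero_add, Nat.zero_mod] at a b
        rw [a, b]
        exact hji
  · rintro ⟨⟨h1, h2⟩, h3, h4⟩
    refine ⟨Nat.add_le_add (Nat.mul_le_mul_left _ h1) h3, fun l hl => ?_⟩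
    rcases le_total l k with h | h
    · rw [Bq_aux_lo _ _ _ _ _ h, Bq_aux_lo _ _ _ _ _ h]
      exact h4 l hl
    · obtain ⟨t, rfl⟩ := Nat.exists_eq_add_of_le h
      rw [Bq_aux_hi _ _ _ _ _ hi, Bq_aux_hi _ _ _ _ _ hj]
      refine Nat.add_le_add (Nat.mul_le_mul_left _ ?_) h3
      rcases Nat.eq_zero_or_pos t with rfl | ht
      · simp [Nat.mod_one]
      · exact h2 t ht

/-- Self-similarity of the fractal zero generalized Pascal matrix:
`B_q(qᵏn+i, qᵏm+j) = B_q(n,m)·B_q(i,j)` for `0 ≤ i, j < qᵏ`. -/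
theorem Bq_self_similar (q : ℕ) (hq : 2 ≤ q) (k : ℕ) (hk : 1 ≤ k)
    (n m i j : ℕ) (hi : i < q ^ k) (hj : j < q ^ k) :
    Bq q (q ^ k * n + i) (q ^ k * m + j) = Bq q n m * Bq q i j := by
  unfold Bq
  have key := Bq_aux_iff q k hk n m i j hi hj
  by_cases h1 : (m ≤ n ∧ ∀ l : ℕ, 1 ≤ l → m % q ^ l ≤ n % q ^ l)
  · by_cases h2 : (j ≤ i ∧ ∀ l : ℕ, 1 ≤ l → j % q ^ l ≤ i % q ^ l)
    · rw [if_pos h1, if_pos h2, if_pos (key.2 ⟨h1, h2⟩), mul_one]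
    · rw [if_neg h2, if_neg (fun h => h2 (key.1 h).2), mul_zero]
  · rw [if_neg h1, if_neg (fun h => h1 (key.1 h).1), zero_mul]
end

section
/- Let q ≥ 2 be an integer and n, m ≥ 0, with base-q digit expansions n = Σ_i n_i q^i and m = Σ_i m_i q^i (0 ≤ n_i, m_i < q). Then B_q(n, m) = ∏_i B_q(n_i, m_i); equivalently, B_q(n, m) = 1 if and only if n_i ≥ m_i for every digit position i. -/
theorem Bq_cond_iff (q : ℕ) (hq : 2 ≤ q) (n m : ℕ) :
    (m ≤ n ∧ ∀ k : ℕ, 1 ≤ k → m % q ^ k ≤ n % q ^ k) ↔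
      ∀ i : ℕ, m / q ^ i % q ≤ n / q ^ i % q := by
  constructor
  · rintro ⟨-, h⟩ i
    have h1 := Nat.div_le_div_right (c := q ^ i) (h (i + 1) (by omega))
    rwa [pow_succ, Nat.mod_mul_right_div_self, Nat.mod_mul_right_div_self] at h1
  · intro h
    have key : ∀ k : ℕ, m % q ^ k ≤ n % q ^ k := by
      intro k
      induction k with
      | zero => simp [Nat.mod_one]
      | succ k ih =>
        rw [Nat.mod_pow_succ, Nat.mod_pow_succ]
        exact Nat.add_le_add ih (Nat.mul_le_mul_left _ (h k))
    refine ⟨?_, fun k _ => key k⟩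
    have h1 := key (n + m)
    have h2 : n + m < q ^ (n + m) := Nat.lt_pow_self (by omega)
    rwa [Nat.mod_eq_of_lt (by omega), Nat.mod_eq_of_lt (by omega)] at h1

theorem Bq_digit (q a b : ℕ) (ha : a < q) (hb : b < q) :
    Bq q a b = if b ≤ a then 1 else 0 := by
  unfold Bq
  congr 1
  refine propext ⟨fun h => h.1, fun h => ⟨h, fun k hk => ?_⟩⟩
  have h2 : q ≤ q ^ k := Nat.le_self_pow (by omega) q
  rwa [Nat.mod_eq_of_lt (by omega), Nat.mod_eq_of_lt (by omega)]

/-- In terms of the base-`q` digits `n_i = (n / qⁱ) mod q`, one has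
`B_q(n,m) = ∏ᵢ B_q(nᵢ, mᵢ)` (a finite product; digits beyond `n + m` vanish);
equivalently `B_q(n,m) = 1` iff `nᵢ ≥ mᵢ` for every digit position `i`. -/
theorem Bq_digits (q : ℕ) (hq : 2 ≤ q) (n m : ℕ) :
    Bq q n m =
      ∏ i ∈ Finset.range (n + m + 1), Bq q (n / q ^ i % q) (m / q ^ i % q) ∧
    (Bq q n m = 1 ↔ ∀ i : ℕ, m / q ^ i % q ≤ n / q ^ i % q) := by
  have hpos : 0 < q := by omega
  constructor
  · rw [Finset.prod_congr rfl (fun i _ => Bq_digit q _ _ (Nat.mod_lt (n / q ^ i) hpos)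
      (Nat.mod_lt (m / q ^ i) hpos))]
    unfold Bq
    by_cases h : ∀ i : ℕ, m / q ^ i % q ≤ n / q ^ i % q
    · rw [if_pos ((Bq_cond_iff q hq n m).2 h)]
      exact (Finset.prod_eq_one fun i _ => if_pos (h i)).symm
    · rw [if_neg (fun h' => h ((Bq_cond_iff q hq n m).1 h'))]
      push Not at h
      obtain ⟨i, hi⟩ := h
      refine (Finset.prod_eq_zero (i := i) ?_ (if_neg (by omega))).symm
      rw [Finset.mem_range]
      by_contra hc
      have h1 : i < q ^ i := Nat.lt_pow_self (by omega)
      rw [Nat.div_eq_of_lt (show m < q ^ i by omega)] at hi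
      simp at hi
  · rw [← Bq_cond_iff q hq n m]
    unfold Bq
    split_ifs with h
    · exact ⟨fun _ => h, fun _ => rfl⟩
    · exact ⟨fun h0 => absurd h0 (by norm_num), fun h0 => absurd h0 h⟩
end

section
/- Let q ≥ 2 be an integer. Define polynomials w_0(x) = 1 and w_d(x) = x^{d−1}(x − 1) for 1 ≤ d < q, and define the integer matrix N by N(n, m) = [x^m] ∏_i w_{n_i}(x^{q^i}), where n = Σ_i n_i q^i is the base-q digit expansion of n (a finite product). Then N is the two-sided inverse of the matrix B_q: Σ_k B_q(n, k) · N(k, m) = δ_{n,m} and Σ_k N(n, k) · B_q(k, m) = δ_{n,m} for all n, m ≥ 0. -/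
open Polynomial

/-- `w₀(x) = 1` and `w_d(x) = x^{d−1}(x−1)` for `1 ≤ d < q`. -/
noncomputable def wPoly (d : ℕ) : Polynomial ℤ :=
  if d = 0 then 1 else X ^ (d - 1) * (X - 1)

/-- Row `n` of the inverse matrix: the coefficients of `∏ᵢ w_{nᵢ}(x^{qⁱ})`, where
`n = ∑ᵢ nᵢ qⁱ` is the base-`q` digit expansion (the range `i ≤ n` captures all
nonzero digits). -/
noncomputable def invRow (q n : ℕ) : Polynomial ℤ :=
  ∏ i ∈ Finset.range (n + 1), (wPoly (n / q ^ i % q)).comp (X ^ q ^ i)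


lemma aux_le (q r s A B : ℕ) (hr : r < q) (h : s + q * B ≤ r + q * A) : B ≤ A := by
  by_contra hc
  have h1 : A + 1 ≤ B := by omega
  have h2 : q * (A + 1) ≤ q * B := Nat.mul_le_mul_left q h1
  rw [Nat.mul_add] at h2
  omega

lemma Bq_rec (q : ℕ) (hq : 2 ≤ q) (a b r s : ℕ) (hr : r < q) (hs : s < q) :
    Bq q (r + q * a) (s + q * b) = if s ≤ r then Bq q a b else 0 := by
  have key : ((s + q * b) ≤ (r + q * a) ∧
      ∀ k : ℕ, 1 ≤ k → (s + q * b) % q ^ k ≤ (r + q * a) % q ^ k) ↔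
      (s ≤ r ∧ (b ≤ a ∧ ∀ k : ℕ, 1 ≤ k → b % q ^ k ≤ a % q ^ k)) := by
    have hm : ∀ x t k : ℕ, t < q → (t + q * x) % q ^ (k + 1) = t + q * (x % q ^ k) := by
      intro x t k ht
      rw [pow_succ', Nat.mod_mul, Nat.add_mul_mod_self_left, Nat.mod_eq_of_lt ht,
        Nat.add_mul_div_left _ _ (by omega), Nat.div_eq_of_lt ht, Nat.zero_add]
    constructor
    · rintro ⟨h1, h2⟩
      refine ⟨?_, aux_le q r s a b hr h1, ?_⟩
      · have := h2 (0 + 1) le_rfl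
        rw [hm _ _ _ hr, hm _ _ _ hs] at this
        simpa [Nat.mod_one] using this
      · intro k _
        have := h2 (k + 1) (by omega)
        rw [hm _ _ _ hr, hm _ _ _ hs] at this
        exact aux_le q r s _ _ hr this
    · rintro ⟨h1, h2, h3⟩
      refine ⟨Nat.add_le_add h1 (Nat.mul_le_mul_left q h2), ?_⟩
      intro k hk
      obtain ⟨j, rfl⟩ : ∃ j, k = j + 1 := ⟨k - 1, by omega⟩
      rw [hm _ _ _ hr, hm _ _ _ hs]
      refine Nat.add_le_add h1 (Nat.mul_le_mul_left q ?_)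
      rcases Nat.eq_zero_or_pos j with rfl | hj
      · simp [Nat.mod_one]
      · exact h3 j hj
  unfold Bq
  by_cases h : s ≤ r
  · rw [if_pos h]
    by_cases h' : b ≤ a ∧ ∀ k : ℕ, 1 ≤ k → b % q ^ k ≤ a % q ^ k
    · rw [if_pos h', if_pos (key.mpr ⟨h, h'⟩)]
    · rw [if_neg h', if_neg (fun hh => h' (key.mp hh).2)]
  · rw [if_neg h, if_neg (fun hh => h (key.mp hh).1)]

lemma Bq_zero_of_lt (q n m : ℕ) (h : n < m) : Bq q n m = 0 := by
  unfold Bq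
  rw [if_neg]
  rintro ⟨h1, -⟩
  omega

lemma invRow_ext (q : ℕ) (hq : 2 ≤ q) (n M : ℕ) (hM : n + 1 ≤ M) :
    invRow q n = ∏ i ∈ Finset.range M, (wPoly (n / q ^ i % q)).comp (X ^ q ^ i) := by
  unfold invRow
  refine Finset.prod_subset (by simpa using hM) ?_
  intro i _ hi
  have hi : n < i := by simp at hi; omega
  have : n < q ^ i := hi.trans (Nat.lt_pow_self (by omega))
  rw [Nat.div_eq_of_lt this]
  simp [wPoly]

lemma invRow_rec (q : ℕ) (hq : 2 ≤ q) (a r : ℕ) (hr : r < q) :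
    invRow q (r + q * a) = wPoly r * (invRow q a).comp (X ^ q) := by
  have ha : a ≤ r + q * a := by nlinarith
  rw [invRow_ext q hq (r + q * a) (r + q * a + 1 + 1) (by omega), Finset.prod_range_succ',
    invRow_ext q hq a (r + q * a + 1) (by omega), Polynomial.prod_comp, mul_comm]
  congr 1
  · simp [Nat.mod_eq_of_lt hr]
  · refine Finset.prod_congr rfl fun i _ => ?_
    rw [pow_succ', ← Nat.div_div_eq_div_mul, Nat.add_mul_div_left _ _ (by omega),
      Nat.div_eq_of_lt hr, Nat.zero_add, Polynomial.comp_assoc]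
    simp [pow_mul]

lemma sum_w (r : ℕ) : ∑ s ∈ Finset.range (r + 1), wPoly s = X ^ r := by
  induction r with
  | zero => simp [wPoly]
  | succ n ih =>
    rw [Finset.sum_range_succ, ih]
    simp [wPoly]
    ring

lemma sum_split (q : ℕ) (f : ℕ → Polynomial ℤ) (a : ℕ) :
    ∑ k ∈ Finset.range (q * a), f k =
      ∑ b ∈ Finset.range a, ∑ s ∈ Finset.range q, f (s + q * b) := by
  induction a with
  | zero => simp
  | succ n ih =>
    rw [Nat.mul_succ, Finset.sum_range_add, ih, Finset.sum_range_succ]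
    simp [add_comm]

lemma sum_ext_s16 (q n M : ℕ) (hM : n + 1 ≤ M) :
    ∑ k ∈ Finset.range (n + 1), C (Bq q n k) * invRow q k =
    ∑ k ∈ Finset.range M, C (Bq q n k) * invRow q k := by
  refine Finset.sum_subset (by simpa using hM) ?_
  intro i _ hi
  rw [Bq_zero_of_lt q n i (by simp at hi; omega)]
  simp

lemma sum_main (q : ℕ) (hq : 2 ≤ q) (n : ℕ) :
    ∑ k ∈ Finset.range (n + 1), C (Bq q n k) * invRow q k = X ^ n := by
  induction n using Nat.strong_induction_on with
  | _ n ih =>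
  rcases Nat.eq_zero_or_pos n with rfl | hn
  · simp [Bq, invRow, wPoly]
  have hlt : n / q < n := Nat.div_lt_self hn (by omega)
  have iha := ih _ hlt
  have hr : n % q < q := Nat.mod_lt _ (by omega)
  have hn' : n = n % q + q * (n / q) := (Nat.mod_add_div n q).symm
  generalize n / q = a at *
  generalize n % q = r at *
  subst hn'
  rw [sum_ext_s16 q _ (q * (a + 1)) (by rw [Nat.mul_succ]; omega), sum_split]
  have h1 : ∀ b ∈ Finset.range (a + 1), ∑ s ∈ Finset.range q,
      C (Bq q (r + q * a) (s + q * b)) * invRow q (s + q * b) =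
      X ^ r * (C (Bq q a b) * invRow q b).comp (X ^ q) := by
    intro b _
    rw [← sum_w, Finset.sum_mul]
    symm
    have hsub : Finset.range (r + 1) ⊆ Finset.range q := by
      intro x hx
      simp at hx ⊢
      omega
    rw [← Finset.sum_subset hsub (f := fun s =>
      C (Bq q (r + q * a) (s + q * b)) * invRow q (s + q * b))]
    · refine Finset.sum_congr rfl fun s hs => ?_
      have hs : s ≤ r := by simp at hs; omega
      rw [Bq_rec q hq a b r s hr (by omega), if_pos hs, invRow_rec q hq b s (by omega)]
      simp only [mul_comp, C_comp]
      ring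
    · intro s hs hs'
      simp at hs hs'
      rw [Bq_rec q hq a b r s hr hs, if_neg (by omega)]
      simp
  have h2 : ∑ b ∈ Finset.range (a + 1), (C (Bq q a b) * invRow q b).comp (X ^ q) =
      (∑ b ∈ Finset.range (a + 1), C (Bq q a b) * invRow q b).comp (X ^ q) :=
    (map_sum (compRingHom (X ^ q : Polynomial ℤ)) _ _).symm
  rw [Finset.sum_congr rfl h1, ← Finset.mul_sum, h2, iha]
  simp [pow_add, pow_mul]

lemma wPoly_deg (d : ℕ) : (wPoly d).natDegree ≤ d := by
  unfold wPoly
  split_ifs with h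
  · simp
  · refine natDegree_mul_le.trans ?_
    have : (X - 1 : Polynomial ℤ).natDegree = 1 := natDegree_X_sub_C 1
    rw [this, natDegree_X_pow]
    omega

lemma invRow_deg (q : ℕ) (hq : 2 ≤ q) (n : ℕ) : (invRow q n).natDegree ≤ n := by
  induction n using Nat.strong_induction_on with
  | _ n ih =>
  rcases Nat.eq_zero_or_pos n with rfl | hn
  · simp [invRow, wPoly]
  have iha := ih _ (Nat.div_lt_self hn (by omega : 1 < q))
  have hr : n % q < q := Nat.mod_lt _ (by omega)
  have hn' : n = n % q + q * (n / q) := (Nat.mod_add_div n q).symm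
  generalize n / q = a at *
  generalize n % q = r at *
  subst hn'
  rw [invRow_rec q hq a r hr]
  refine natDegree_mul_le.trans (Nat.add_le_add (wPoly_deg r) ?_)
  rw [natDegree_comp, natDegree_X_pow, mul_comm]
  exact Nat.mul_le_mul_left q iha

lemma left_inv_main (q : ℕ) (hq : 2 ≤ q) (n m : ℕ) : ∑ k ∈ Finset.range (n + 1),
        Bq q n k * (invRow q k).coeff m = if n = m then 1 else 0 := by
  have h := congrArg (fun p => p.coeff m) (sum_main q hq n)
  simp only [finsetSum_coeff, coeff_C_mul, coeff_X_pow] at h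
  rw [h]
  simp only [eq_comm]

/-- The matrix `N(n,m) = [xᵐ] ∏ᵢ w_{nᵢ}(x^{qⁱ})` is the two-sided inverse of the
fractal zero generalized Pascal matrix `B_q`. -/
theorem invRow_inverse_Bq (q : ℕ) (hq : 2 ≤ q) :
    (∀ n m : ℕ, ∑ k ∈ Finset.range (n + 1),
        Bq q n k * (invRow q k).coeff m = if n = m then 1 else 0) ∧
    (∀ n m : ℕ, ∑ k ∈ Finset.range (n + 1),
        (invRow q n).coeff k * Bq q k m = if n = m then 1 else 0) := by
  refine ⟨left_inv_main q hq, fun n m => ?_⟩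
  let M := n + m + 1
  let A : Matrix (Fin M) (Fin M) ℤ := fun i j => Bq q i j
  let N : Matrix (Fin M) (Fin M) ℤ := fun i j => (invRow q i).coeff j
  have hAN : A * N = 1 := by
    ext i j
    rw [Matrix.mul_apply, Matrix.one_apply]
    have h := left_inv_main q hq i j
    rw [Finset.sum_subset (s₂ := Finset.range M)] at h
    · rw [Finset.sum_range] at h
      simpa [A, N, Fin.ext_iff] using h
    · intro x hx
      have := i.2
      simp at hx ⊢
      omega
    · intro x _ hx
      rw [Bq_zero_of_lt q i x (by simp at hx; omega), zero_mul]
  have hNA : N * A = 1 := mul_eq_one_comm.mp hAN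
  have h := congrFun (congrFun hNA ⟨n, by omega⟩) ⟨m, by omega⟩
  rw [Matrix.mul_apply, Matrix.one_apply] at h
  rw [Finset.sum_subset (s₂ := Finset.range M)]
  · rw [Finset.sum_range]
    simpa [A, N, Fin.ext_iff] using h
  · intro x hx
    simp [M] at hx ⊢
    omega
  · intro x _ hx
    rw [coeff_eq_zero_of_natDegree_lt, zero_mul]
    refine (invRow_deg q hq n).trans_lt ?_
    simp at hx
    omega
end

section
/- Let R be a commutative ring, q ≥ 2 an integer, and let ∘ be the w-product on R[[x]] with weight w(n,m) = (₍₀,q₎P)_{n,m}. Let a₁ = 1 + z₁ and a₂ = 1 + z₂ where z₁, z₂ ∈ R[[x]] satisfy (z₁)_k = 0 and (z₂)_k = 0 whenever k mod q < ⌈q/2⌉. Then: (a) xⁿ ∘ a₁^{(n)} = xⁿ for every n ≥ 0 with n mod q ≥ ⌈q/2⌉; (b) the ∘-substitution of a₁ into a₂ satisfies a₂∘(a₁) := Σ_{n≥0} (a₂)_n · (xⁿ ∘ a₁^{(n)}) = a₂. -/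
open PowerSeries

/-- The `∘`-substitution `b∘(a) = ∑_{n≥0} bₙ·(xⁿ ∘ a^{(n)})`, computed
coefficientwise. -/
noncomputable def wsubst {R : Type*} [CommRing R] (w : ℕ → ℕ → R)
    (b a : PowerSeries R) : PowerSeries R :=
  PowerSeries.mk fun k => ∑ n ∈ Finset.range (k + 1),
    PowerSeries.coeff n b * PowerSeries.coeff k (wmul w (X ^ n) (wpow w a n))

lemma wpow_l {R : Type*} [CommRing R] (q : ℕ)
    (w : ℕ → ℕ → R)
    (hw : ∀ n m, w n m = if m ≤ n ∧ m % q ≤ n % q then 1 else 0)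
    (a : PowerSeries R)
    (h0 : PowerSeries.coeff 0 a = 1)
    (ha : ∀ k : ℕ, k ≠ 0 → k % q < (q + 1) / 2 → PowerSeries.coeff k a = 0) (n : ℕ) :
    PowerSeries.coeff 0 (wpow w a n) = 1 ∧
    ∀ k : ℕ, k ≠ 0 → k % q < (q + 1) / 2 → PowerSeries.coeff k (wpow w a n) = 0 := by
  induction n with
  | zero =>
    refine ⟨by simp [wpow], fun k hk _ => ?_⟩
    simp [wpow, PowerSeries.coeff_one, hk]
  | succ n ih =>
    obtain ⟨i0, i1⟩ := ih
    constructor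
    · rw [wpow, wmul, PowerSeries.coeff_mk]
      rw [Finset.sum_range_one, h0, i0, hw]
      simp
    · intro k hk hkq
      rw [wpow, wmul, PowerSeries.coeff_mk]
      apply Finset.sum_eq_zero
      intro m hm
      by_cases hm0 : m = 0
      · subst hm0
        rw [Nat.sub_zero, i1 k hk hkq, mul_zero]
      · by_cases hmq : m % q < (q + 1) / 2
        · rw [ha m hm0 hmq]; simp
        · rw [hw, if_neg (by omega)]; simp

lemma wmul_X_pow {R : Type*} [CommRing R] (q : ℕ) (hq : 2 ≤ q)
    (w : ℕ → ℕ → R)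
    (hw : ∀ n m, w n m = if m ≤ n ∧ m % q ≤ n % q then 1 else 0)
    (p : PowerSeries R)
    (h0 : PowerSeries.coeff 0 p = 1)
    (hp : ∀ k : ℕ, k ≠ 0 → k % q < (q + 1) / 2 → PowerSeries.coeff k p = 0) (n : ℕ)
    (hn : (q + 1) / 2 ≤ n % q) :
    wmul w (X ^ n) p = X ^ n := by
  ext k
  rw [wmul, PowerSeries.coeff_mk, PowerSeries.coeff_X_pow]
  by_cases hkn : k = n
  · subst hkn
    rw [Finset.sum_eq_single k]
    · simp only [Nat.sub_self, h0, hw, PowerSeries.coeff_X_pow]; simp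
    · intro m _ hm
      rw [PowerSeries.coeff_X_pow, if_neg hm]; simp
    · intro h; simp at h
  · rw [if_neg hkn]
    apply Finset.sum_eq_zero
    intro m hm
    rw [PowerSeries.coeff_X_pow]
    by_cases hmn : m = n
    · subst hmn
      rw [hw, if_pos rfl]
      split_ifs with hc
      · have hlt : k % q < q := Nat.mod_lt _ (by omega)
        have e : (k - m) % q = k % q - m % q := by
          have e1 := Nat.div_add_mod k q
          have e2 := Nat.div_add_mod m q
          have hd : m / q ≤ k / q := Nat.div_le_div_right hc.1
          obtain ⟨d, hd⟩ := Nat.exists_eq_add_of_le hd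
          have : k - m = (k % q - m % q) + q * d := by
            rw [hd, mul_add] at e1
            omega
          rw [this, Nat.add_mul_mod_self_left, Nat.mod_eq_of_lt (by omega)]
        rw [hp (k - m) (by omega) (by omega)]; simp
      · simp
    · rw [if_neg hmn]; simp

/-- For the weight `w(n,m) = (₍₀,q₎P)_{n,m}` and `l`-series `a₁ = 1 + z₁`,
`a₂ = 1 + z₂` (with `z₁, z₂` supported on exponents whose residue mod `q` is at
least `⌈q/2⌉`): (a) `xⁿ ∘ a₁^{(n)} = xⁿ` whenever `n mod q ≥ ⌈q/2⌉`, and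
(b) `a₂∘(a₁) = a₂`. -/
theorem lseries_subst {R : Type*} [CommRing R] (q : ℕ) (hq : 2 ≤ q)
    (w : ℕ → ℕ → R)
    (hw : ∀ n m, w n m = if m ≤ n ∧ m % q ≤ n % q then 1 else 0)
    (z₁ z₂ : PowerSeries R)
    (h₁ : ∀ k : ℕ, k % q < (q + 1) / 2 → PowerSeries.coeff k z₁ = 0)
    (h₂ : ∀ k : ℕ, k % q < (q + 1) / 2 → PowerSeries.coeff k z₂ = 0) :
    (∀ n : ℕ, (q + 1) / 2 ≤ n % q →
      wmul w (X ^ n) (wpow w (1 + z₁) n) = X ^ n) ∧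
    wsubst w (1 + z₂) (1 + z₁) = 1 + z₂ := by
  have c0 : PowerSeries.coeff 0 (1 + z₁) = 1 := by
    rw [map_add, h₁ 0 (by rw [Nat.zero_mod]; omega)]; simp
  have c1 : ∀ k : ℕ, k ≠ 0 → k % q < (q + 1) / 2 → PowerSeries.coeff k (1 + z₁) = 0 := by
    intro k hk hkq
    rw [map_add, h₁ k hkq, PowerSeries.coeff_one, if_neg hk, add_zero]
  have A : ∀ n : ℕ, (q + 1) / 2 ≤ n % q →
      wmul w (X ^ n) (wpow w (1 + z₁) n) = X ^ n := fun n hn =>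
    wmul_X_pow q hq w hw _ (wpow_l q w hw _ c0 c1 n).1 (wpow_l q w hw _ c0 c1 n).2 n hn
  refine ⟨A, ?_⟩
  have Z : wmul w (X ^ 0) (wpow w (1 + z₁) 0) = X ^ 0 := by
    ext k
    rw [wmul, PowerSeries.coeff_mk, Finset.sum_eq_single 0]
    · simp [wpow, hw]
    · intro m _ hm
      rw [PowerSeries.coeff_X_pow, if_neg hm]; simp
    · intro h; simp at h
  have B : ∀ n k : ℕ, PowerSeries.coeff n (1 + z₂) *
      PowerSeries.coeff k (wmul w (X ^ n) (wpow w (1 + z₁) n)) =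
      PowerSeries.coeff n (1 + z₂) * (if k = n then 1 else 0) := by
    intro n k
    by_cases hn : n = 0
    · subst hn
      rw [Z, PowerSeries.coeff_X_pow]
    · by_cases hnq : n % q < (q + 1) / 2
      · rw [map_add, h₂ n hnq, PowerSeries.coeff_one, if_neg hn]; simp
      · rw [A n (by omega), PowerSeries.coeff_X_pow]
  ext k
  rw [wsubst, PowerSeries.coeff_mk]
  simp only [B]
  simp
end
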